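/- arXiv:1607.03826 — 2 statements merged into one kernel-verified Lean document; each statement's English description precedes it below -/
import Mathlib

section
/- For a set A ⊂ 𝒮, every infinite extension of A is closed and discrete in ω^ω if and only if for every σ ∈ ω^ω there exists m ∈ ω such that the set {s ∈ A : s is comparable with σ|m} is finite (where σ|m denotes the initial segment of σ of length m). -/
/-!
A subset of the Baire space is closed and discrete exactly when each `σ` has a basic neighbourhood
meeting it in a finite set (`closedDiscrete_iff`). Let `H` be an infinite extension of `A` via `φ`.
If `φ s` agrees with `σ` up to `m`, then `s` and `σ|m` are both initial segments of `φ s`, hence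
comparable; so the finiteness condition on `A` makes every infinite extension locally finite.
Conversely, extend each `s ∈ A` by a constant tail that codes `s`. This is an injective choice of
extensions, so local finiteness of its image leaves only finitely many `s ∈ A` extending `σ|m`,
and the remaining `s` comparable with `σ|m` are among its finitely many initial segments.
-/


open Topology

noncomputable section

universe u

/-- Finite sequences of non-negative integers (`𝒮`). -/
abbrev FinSeq := List ℕ

/-- The Baire space `ω^ω` of infinite sequences of non-negative integers,
with the product topology. -/
abbrev Baire := ℕ → ℕ

/-- The initial segment `σ|m` of `σ ∈ ω^ω` of length `m`. -/
def seqTake (σ : Baire) (m : ℕ) : FinSeq := (List.range m).map σ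

/-- `σ ∈ ω^ω` extends the finite sequence `s`. -/
def ExtendsF (σ : Baire) (s : FinSeq) : Prop := seqTake σ s.length = s

/-- Two finite sequences are comparable if one is an initial segment of the other. -/
def Comparable (s t : FinSeq) : Prop := s <+: t ∨ t <+: s

/-- The smallest tree (set of finite sequences closed under initial segments)
containing `S`. -/
def clTr (S : Set FinSeq) : Set FinSeq := {u | ∃ s ∈ S, u <+: s}

/-- The basic clopen set `N(s)` of all infinite sequences extending `s`. -/
def Nbhd (s : FinSeq) : Set Baire := {σ | ExtendsF σ s}

/-- `A ⊂ ω^ω` is an infinite extension of `B ⊂ 𝒮`: there is a bijection of `B` onto `A`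
sending each `s` to an infinite sequence extending it. -/
def InfExtension (B : Set FinSeq) (A : Set Baire) : Prop :=
  ∃ φ : FinSeq → Baire, Set.BijOn φ B A ∧ ∀ s ∈ B, ExtendsF (φ s) s

/-- A subset of the Baire space is closed and discrete (as a subspace). -/
def ClosedDiscrete (A : Set Baire) : Prop := IsClosed A ∧ DiscreteTopology A

/-- The family `𝒟` of sets of pairwise incomparable finite sequences all of whose
infinite extensions are closed and discrete in `ω^ω`. -/
def memD (D : Set FinSeq) : Prop :=
  (∀ s ∈ D, ∀ t ∈ D, s ≠ t → ¬ Comparable s t) ∧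
  ∀ A : Set Baire, InfExtension D A → ClosedDiscrete A

theorem length_seqTake (σ : Baire) (m : ℕ) : (seqTake σ m).length = m := by
  simp [seqTake]

theorem seqTake_eq_iff {σ τ : Baire} {m : ℕ} :
    seqTake τ m = seqTake σ m ↔ τ ∈ PiNat.cylinder σ m := by
  simp [seqTake, PiNat.mem_cylinder_iff]

theorem take_seqTake (σ : Baire) {k m : ℕ} (h : k ≤ m) :
    (seqTake σ m).take k = seqTake σ k := by
  simp [seqTake, ← List.map_take, List.take_range, h]

theorem seqTake_prefix (σ : Baire) {k m : ℕ} (h : k ≤ m) : seqTake σ k <+: seqTake σ m := by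
  rw [← take_seqTake σ h]
  exact List.take_prefix _ _

theorem eq_seqTake_of_prefix {s : FinSeq} {σ : Baire} {m : ℕ} (h : s <+: seqTake σ m) :
    s = seqTake σ s.length := by
  have hl := h.length_le
  rw [length_seqTake] at hl
  rw [← take_seqTake σ hl]
  exact List.prefix_iff_eq_take.1 h

/-- A set is closed and discrete iff it is locally finite. A neighbourhood of `σ` meeting `H` in a
finite set shrinks to one meeting it in at most `σ`, since finite sets are closed. -/
theorem closedDiscrete_iff (H : Set Baire) :
    ClosedDiscrete H ↔ ∀ σ : Baire, ∃ m : ℕ, (H ∩ PiNat.cylinder σ m).Finite := by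
  have key : ClosedDiscrete H ↔ ∀ x, Disjoint (𝓝[≠] x) (Filter.principal H) := by
    rw [← isClosed_and_discrete_iff]
    exact and_congr_right fun _ => ⟨fun h => ⟨h⟩, fun h => h.1⟩
  rw [key]
  refine forall_congr' fun σ => ?_
  rw [Filter.disjoint_principal_right, mem_nhdsWithin]
  constructor
  · rintro ⟨U, hU, hσ, hsub⟩
    obtain ⟨V, ⟨x, m, rfl⟩, hx, hV⟩ :=
      (PiNat.isTopologicalBasis_cylinders (fun _ : ℕ => ℕ)).exists_subset_of_mem_open hσ hU
    refine ⟨m, (Set.finite_singleton σ).subset ?_⟩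
    rintro τ ⟨hτH, hτ⟩
    by_contra hne
    rw [PiNat.mem_cylinder_iff_eq.1 hx] at hτ
    exact hsub ⟨hV hτ, hne⟩ hτH
  · rintro ⟨m, hm⟩
    refine ⟨PiNat.cylinder σ m ∩ ((H ∩ PiNat.cylinder σ m) \ {σ})ᶜ,
      (PiNat.isOpen_cylinder _ σ m).inter hm.sdiff.isClosed.isOpen_compl,
      ⟨PiNat.self_mem_cylinder σ m, fun h => h.2 rfl⟩, ?_⟩
    rintro τ ⟨⟨hτ, hn⟩, hne⟩ hτH
    exact hn ⟨⟨hτH, hτ⟩, hne⟩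

/-- The sequence `s` followed by the constant tail with value the code of `s`. -/
def codeExt (s : FinSeq) : Baire := fun i => s.getD i (Encodable.encode s)

theorem codeExt_extends (s : FinSeq) : ExtendsF (codeExt s) s := by
  refine List.ext_getElem (length_seqTake _ _) fun i h₁ h₂ => ?_
  simp [seqTake, codeExt, h₂]

theorem codeExt_injective : Function.Injective codeExt := by
  intro s t h
  -- beyond both lengths, the values are the codes of `s` and `t`
  have := congrFun h (max s.length t.length)
  simp only [codeExt] at this
  rw [List.getD_eq_default _ _ (le_max_left _ _),
    List.getD_eq_default _ _ (le_max_right _ _)] at this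
  exact Encodable.encode_injective this

/-- For a set `A ⊆ 𝒮`, every infinite extension of `A` is closed and discrete in `ω^ω` if
and only if for every `σ ∈ ω^ω` there is `m ∈ ω` such that only finitely many `s ∈ A` are
comparable with `σ|m`. -/
theorem statement13 (A : Set FinSeq) :
    (∀ H : Set Baire, InfExtension A H → ClosedDiscrete H) ↔
    (∀ σ : Baire, ∃ m : ℕ, {s ∈ A | Comparable s (seqTake σ m)}.Finite) := by
  simp only [closedDiscrete_iff]
  constructor
  · intro h σ
    obtain ⟨m, hm⟩ := h (codeExt '' A)
      ⟨codeExt, codeExt_injective.injOn.bijOn_image, fun s _ => codeExt_extends s⟩ σ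
    refine ⟨m, ((hm.preimage codeExt_injective.injOn).union
      ((Set.finite_Iic m).image (seqTake σ))).subset ?_⟩
    rintro s ⟨hs, hc | hc⟩
    · refine Or.inr ⟨s.length, ?_, (eq_seqTake_of_prefix hc).symm⟩
      simpa [length_seqTake] using hc.length_le
    · refine Or.inl ⟨Set.mem_image_of_mem _ hs, seqTake_eq_iff.1 ?_⟩
      rw [← codeExt_extends s] at hc
      simpa only [length_seqTake] using (eq_seqTake_of_prefix hc).symm
  · rintro h H ⟨φ, hφ, hext⟩ σ
    obtain ⟨m, hm⟩ := h σ
    refine ⟨m, (hm.image φ).subset ?_⟩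
    rintro τ ⟨hτH, hτ⟩
    obtain ⟨s, hs, rfl⟩ := hφ.surjOn hτH
    refine ⟨s, ⟨hs, ?_⟩, rfl⟩
    have hc : Comparable (seqTake (φ s) s.length) (seqTake (φ s) m) :=
      (le_total s.length m).imp (seqTake_prefix _) (seqTake_prefix _)
    rwa [hext s hs, seqTake_eq_iff.2 hτ] at hc

end
end

section
/- Let α < ω₁ and suppose a set H ⊂ ω^ω contains an infinite extension of some B ⊂ 𝒮 with r_i(B) ≥ α. Then H cannot be covered by finitely many elements of ⋃_{β<α} 𝓔_β. -/
/-!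
Write `T = cl_Tr(B)`. The theorem follows from a local version (`not_covered`): if
`t ∈ D_i^α(T)`, then `A ∩ N(t)` is not covered by finitely many elements of `⋃_{β<α} 𝓔_β`.
It is applied to `t = ∅`, which lies in `D_i^α(T)` as soon as `r_i(B) ≥ α`
(`nil_mem_of_le_rank`), because all the derivatives of `T` are trees.

The local version is proved by induction on `α`. A finite family taken from `⋃_{β<α} 𝓔_β` with
`α` a limit already lies in `⋃_{β<γ} 𝓔_β` for some `γ < α`. For `α = 1` the members of the family
are singletons, whereas `A ∩ N(t)` is infinite. For `α = γ + 1` with `γ ≥ 1`, each member `E` of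
the family has a handle `h`: if `s` is not an initial segment of `h`, then `E ∩ N(s)` is contained
in a single element of `⋃_{β<γ} 𝓔_β` (`exists_handle`), since `N(s)` meets at most one of the
branches `h⌢f_n` of the broom. By the induction hypothesis, each of the infinitely many
`s ∈ D_i^γ(T)` extending `t` must be an initial segment of one of the finitely many handles, which
is impossible.
-/


open Topology

noncomputable section

universe u

/-- The first uncountable ordinal `ω₁`. -/
def omega1 : Ordinal.{0} := Ordinal.omega 1

/-- The "infinite branching" derivative of a set of finite sequences:
the elements extended by infinitely many elements of the set. -/
def Di (T : Set FinSeq) : Set FinSeq := {t ∈ T | {s ∈ T | t <+: s}.Infinite}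

/-- Iterated derivative `D_i^α`. -/
def DiIter (T : Set FinSeq) (α : Ordinal.{0}) : Set FinSeq :=
  Ordinal.limitRecOn α T (fun _ ih => Di ih)
    (fun o _ ih => ⋂ (β : Ordinal) (h : β < o), ih β h)

open Classical in
/-- The rank `r_i` of a set `S` of finite sequences, computed on the generated tree
`cl_Tr(S)`: it is `⊥` (representing `-1`) if the tree is empty, the least `α < ω₁` with
`D_i^{α+1}(cl_Tr S) = ∅` if such an `α` exists, and `ω₁` otherwise. (For a finite nonempty
tree the least such `α` is `0`, in accordance with the definition of `r_i`.) -/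
def rank (S : Set FinSeq) : WithBot Ordinal.{0} :=
  if clTr S = ∅ then ⊥
  else if ∃ α, α < omega1 ∧ DiIter (clTr S) (α + 1) = ∅ then
    ↑(sInf {α | α < omega1 ∧ DiIter (clTr S) (α + 1) = ∅})
  else ↑omega1

/-- `h⌢k⌢t` : concatenation of a finite sequence `h`, a single term `k` and a finite
sequence `t`. -/
def brGlue (h : FinSeq) (k : ℕ) (t : FinSeq) : FinSeq := h ++ k :: t

open Classical in
/-- The broom classes `B_α`: `B_0` consists of the singletons `{s}`, `s ∈ 𝒮`; for `α ≥ 1`,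
`B_α` is the union of `⋃_{β<α} B_β` and all sets of the form `⋃_{n∈ω} h⌢f_n⌢B_n` with
`h ∈ 𝒮`, each `B_n ∈ ⋃_{β<α} B_β` and `(f_n)` an injective sequence. -/
def Broom : Ordinal.{0} → Set (Set FinSeq)
  | α =>
    if α = 0 then {B | ∃ s : FinSeq, B = {s}}
    else
      {B | (∃ β, ∃ _ : β < α, B ∈ Broom β) ∨
        ∃ (h : FinSeq) (f : ℕ → ℕ) (Bn : ℕ → Set FinSeq),
          Function.Injective f ∧
          (∀ n, ∃ β, ∃ _ : β < α, Bn n ∈ Broom β) ∧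
          B = ⋃ n, brGlue h (f n) '' Bn n}
termination_by α => α

/-- The family `𝓔_α` of infinite extensions of broom sets of class `α`. -/
def Eclass (α : Ordinal.{0}) : Set (Set Baire) :=
  {E | ∃ B ∈ Broom α, InfExtension B E}

theorem ExtendsF.mono {σ : Baire} {s t : FinSeq} (h : ExtendsF σ t) (hst : s <+: t) :
    ExtendsF σ s := by
  obtain ⟨u, rfl⟩ := hst
  unfold ExtendsF seqTake at *
  rw [List.length_append, List.range_add, List.map_append] at h
  exact (List.append_inj h (by simp)).1

theorem ExtendsF.prefix_of_length_le {σ : Baire} {s t : FinSeq} (hs : ExtendsF σ s)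
    (ht : ExtendsF σ t) (hl : s.length ≤ t.length) : s <+: t := by
  unfold ExtendsF seqTake at *
  obtain ⟨d, hd⟩ := Nat.exists_eq_add_of_le hl
  rw [← hs, ← ht, hd, List.range_add, List.map_append]
  exact List.prefix_append _ _

theorem DiIter_zero (T : Set FinSeq) : DiIter T 0 = T :=
  Ordinal.limitRecOn_zero ..

theorem DiIter_succ (T : Set FinSeq) (α : Ordinal.{0}) :
    DiIter T (α + 1) = Di (DiIter T α) := by
  unfold DiIter
  exact Ordinal.limitRecOn_add_one ..

theorem DiIter_limit (T : Set FinSeq) {α : Ordinal.{0}} (hα : Order.IsSuccLimit α) :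
    DiIter T α = ⋂ (β : Ordinal) (_ : β < α), DiIter T β := by
  unfold DiIter
  exact Ordinal.limitRecOn_limit _ _ _ _ hα

theorem Di_prefix_closed {T : Set FinSeq} (hT : ∀ s ∈ T, ∀ t, t <+: s → t ∈ T) :
    ∀ s ∈ Di T, ∀ t, t <+: s → t ∈ Di T := fun s hs t hts =>
  ⟨hT s hs.1 t hts, hs.2.mono fun _ hu => ⟨hu.1, hts.trans hu.2⟩⟩

theorem DiIter_prefix_closed (B : Set FinSeq) (α : Ordinal.{0}) :
    ∀ s ∈ DiIter (clTr B) α, ∀ t, t <+: s → t ∈ DiIter (clTr B) α := by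
  induction α using Ordinal.limitRecOn with
  | zero =>
    rw [DiIter_zero]
    rintro s ⟨b, hb, hsb⟩ t hts
    exact ⟨b, hb, hts.trans hsb⟩
  | add_one α ih =>
    rw [DiIter_succ]
    exact Di_prefix_closed ih
  | limit α hα ih =>
    rw [DiIter_limit _ hα]
    intro s hs t hts
    simp only [Set.mem_iInter] at hs ⊢
    exact fun β hβ => ih β hβ s (hs β hβ) t hts

/-- If `r_i(B) ≥ α` then `D_i^α(cl_Tr B)` is nonempty, hence contains the root. At
limit stages it is essential that the derivatives are trees, so that they all share the root. -/
theorem nil_mem_of_le_rank {α : Ordinal.{0}} (hα : α < omega1) {B : Set FinSeq}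
    (hrank : (α : WithBot Ordinal.{0}) ≤ rank B) : [] ∈ DiIter (clTr B) α := by
  have hne : clTr B ≠ ∅ := by
    intro h
    simp [rank, h] at hrank
  have key : ∀ β < α, [] ∈ DiIter (clTr B) (β + 1) := by
    intro β hβ
    by_contra hcon
    have hemp : DiIter (clTr B) (β + 1) = ∅ := by
      rw [Set.eq_empty_iff_forall_notMem]
      exact fun s hs => hcon (DiIter_prefix_closed B _ s hs [] List.nil_prefix)
    have hex : ∃ α, α < omega1 ∧ DiIter (clTr B) (α + 1) = ∅ := ⟨β, hβ.trans hα, hemp⟩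
    rw [rank, if_neg hne, if_pos hex, WithBot.coe_le_coe] at hrank
    exact absurd (hrank.trans (csInf_le' ⟨hβ.trans hα, hemp⟩)) (not_le.2 hβ)
  rcases Ordinal.zero_or_succ_or_isSuccLimit α with rfl | ⟨β, rfl⟩ | hlim
  · rw [DiIter_zero]
    obtain ⟨s, b, hb, -⟩ := Set.nonempty_iff_ne_empty.2 hne
    exact ⟨b, hb, List.nil_prefix⟩
  · exact key β (Order.lt_succ β)
  · rw [DiIter_limit _ hlim]
    simp only [Set.mem_iInter]
    intro β hβ
    have := key β hβ
    rw [DiIter_succ] at this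
    exact this.1

theorem mem_Broom_zero {B : Set FinSeq} : B ∈ Broom 0 ↔ ∃ s : FinSeq, B = {s} := by
  rw [Broom]
  simp

theorem mem_Broom_of_ne_zero {α : Ordinal.{0}} (hα : α ≠ 0) {B : Set FinSeq} :
    B ∈ Broom α ↔ (∃ β, ∃ _ : β < α, B ∈ Broom β) ∨
      ∃ (h : FinSeq) (f : ℕ → ℕ) (Bn : ℕ → Set FinSeq),
        Function.Injective f ∧ (∀ n, ∃ β, ∃ _ : β < α, Bn n ∈ Broom β) ∧
        B = ⋃ n, brGlue h (f n) '' Bn n := by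
  rw [Broom]
  simp [hα]

theorem append_image_mem_Broom (g : FinSeq) (α : Ordinal.{0}) :
    ∀ B ∈ Broom α, (g ++ ·) '' B ∈ Broom α := by
  induction α using WellFoundedLT.induction with
  | ind α ih =>
    intro B hB
    by_cases hα : α = 0
    · subst hα
      obtain ⟨s, rfl⟩ := mem_Broom_zero.1 hB
      exact mem_Broom_zero.2 ⟨g ++ s, by simp⟩
    · rw [mem_Broom_of_ne_zero hα] at hB ⊢
      rcases hB with ⟨β, hβ, hB⟩ | ⟨h, f, Bn, hf, hBn, rfl⟩
      · exact Or.inl ⟨β, hβ, ih β hβ B hB⟩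
      · refine Or.inr ⟨g ++ h, f, Bn, hf, hBn, ?_⟩
        rw [Set.image_iUnion]
        refine Set.iUnion_congr fun n => ?_
        rw [Set.image_image]
        exact Set.image_congr fun x _ => (List.append_assoc g h (f n :: x)).symm

theorem brGlue_image_mem_Broom (h : FinSeq) (k : ℕ) {α : Ordinal.{0}} {B : Set FinSeq}
    (hB : B ∈ Broom α) : brGlue h k '' B ∈ Broom α := by
  have := append_image_mem_Broom (h ++ [k]) α B hB
  convert this using 1
  exact Set.image_congr fun x _ => by simp [brGlue]

/-- An element `E` of `𝓔_β` with `β ≤ γ` has a handle `h`: on any `N(s)` with `s` not an initial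
segment of `h`, it is contained in an element of `⋃_{β<γ} 𝓔_β`. When the defining broom is
`⋃_n h⌢f_n⌢B_n`, such an `N(s)` meets at most one of the disjoint sets `N(h⌢f_n)`. -/
theorem exists_handle {β γ : Ordinal.{0}} (hγ : γ ≠ 0) (hβ : β ≤ γ) {E : Set Baire}
    (hE : E ∈ Eclass β) : ∃ h : FinSeq, ∀ s : FinSeq, ¬ s <+: h →
      ∃ E' : Set Baire, E ∩ Nbhd s ⊆ E' ∧ ∃ δ < γ, E' ∈ Eclass δ := by
  rcases hβ.lt_or_eq with hlt | rfl
  · exact ⟨[], fun s _ => ⟨E, Set.inter_subset_left, β, hlt, hE⟩⟩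
  obtain ⟨B, hB, φ, hφ, hext⟩ := hE
  rcases (mem_Broom_of_ne_zero hγ).1 hB with ⟨δ, hδ, hBδ⟩ | ⟨h, f, Bn, hf, hBn, rfl⟩
  · exact ⟨[], fun s _ => ⟨E, Set.inter_subset_left, δ, hδ, B, hBδ, φ, hφ, hext⟩⟩
  refine ⟨h, fun s hs => ?_⟩
  have branch : ∀ n, ∀ b ∈ brGlue h (f n) '' Bn n, ExtendsF (φ b) (h ++ [f n]) := by
    rintro n _ ⟨b, hb, rfl⟩
    refine (hext _ (Set.mem_iUnion.2 ⟨n, b, hb, rfl⟩)).mono ⟨b, ?_⟩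
    simp [brGlue]
  rcases (E ∩ Nbhd s).eq_empty_or_nonempty with hemp | ⟨x, hxE, hxs⟩
  · -- any element of `𝓔_0` contains the empty set
    refine ⟨{fun _ => 0}, by simp [hemp], 0, pos_iff_ne_zero.2 hγ, {[]},
      mem_Broom_zero.2 ⟨[], rfl⟩, fun _ _ => 0, by simp, ?_⟩
    simp [ExtendsF, seqTake]
  obtain ⟨b, hb, rfl⟩ := hφ.surjOn hxE
  obtain ⟨n, hbn⟩ := Set.mem_iUnion.1 hb
  have hns : h ++ [f n] <+: s := by
    refine (branch n b hbn).prefix_of_length_le hxs ?_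
    by_contra hlt
    simp only [List.length_append, List.length_singleton, not_le] at hlt
    exact hs (ExtendsF.prefix_of_length_le hxs ((branch n b hbn).mono (List.prefix_append _ _))
      (by omega))
  obtain ⟨δ, hδ, hBδ⟩ := hBn n
  have hsub : brGlue h (f n) '' Bn n ⊆ ⋃ n, brGlue h (f n) '' Bn n :=
    Set.subset_iUnion (fun n => brGlue h (f n) '' Bn n) n
  refine ⟨φ '' (brGlue h (f n) '' Bn n), ?_, δ, hδ, _, brGlue_image_mem_Broom h (f n) hBδ, φ,
    (hφ.injOn.mono hsub).bijOn_image, fun c hc => hext c (hsub hc)⟩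
  rintro y ⟨hyE, hys⟩
  obtain ⟨c, hc, rfl⟩ := hφ.surjOn hyE
  obtain ⟨m, hcm⟩ := Set.mem_iUnion.1 hc
  -- both `h⌢f_n` and `h⌢f_m` are initial segments of `y` of the same length
  have hnm : h ++ [f n] = h ++ [f m] := by
    have hp := (ExtendsF.mono hys hns).prefix_of_length_le (branch m c hcm) (by simp)
    exact hp.eq_of_length (by simp)
  have hnm' : n = m := hf (by simpa using hnm)
  subst hnm'
  exact ⟨c, hcm, rfl⟩

/-- `X` is covered by finitely many elements of `⋃_{β<α} 𝓔_β`. -/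
def Covered (α : Ordinal.{0}) (X : Set Baire) : Prop :=
  ∃ F : Set (Set Baire), F.Finite ∧ (∀ E ∈ F, ∃ β < α, E ∈ Eclass β) ∧ X ⊆ ⋃₀ F

/-- Finitely many ordinals below a limit ordinal are bounded strictly below it. -/
theorem Covered.exists_lt_of_limit {α : Ordinal.{0}} (hα : Order.IsSuccLimit α) {X : Set Baire}
    (h : Covered α X) : ∃ γ < α, Covered γ X := by
  obtain ⟨F, hF, hFE, hX⟩ := h
  suffices ∃ γ < α, ∀ E ∈ F, ∃ β < γ, E ∈ Eclass β by
    obtain ⟨γ, hγ, h⟩ := this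
    exact ⟨γ, hγ, F, hF, h, hX⟩
  clear hX
  induction F, hF using Set.Finite.induction_on with
  | empty => exact ⟨0, hα.bot_lt, by simp⟩
  | @insert E F _ _ ih =>
    obtain ⟨γ, hγ, h⟩ := ih fun E' hE' => hFE E' (Set.mem_insert_of_mem _ hE')
    obtain ⟨β, hβ, hE⟩ := hFE E (Set.mem_insert _ _)
    refine ⟨max γ (Order.succ β), max_lt hγ (hα.succ_lt hβ), ?_⟩
    rintro E' (rfl | hE')
    · exact ⟨β, lt_max_of_lt_right (Order.lt_succ β), hE⟩
    · obtain ⟨δ, hδ, h'⟩ := h E' hE'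
      exact ⟨δ, lt_max_of_lt_left hδ, h'⟩

theorem Covered.finite {X : Set Baire} (h : Covered 1 X) : X.Finite := by
  obtain ⟨F, hF, hFE, hX⟩ := h
  refine (hF.sUnion fun E hE => ?_).subset hX
  obtain ⟨β, hβ, B, hB, φ, hφ, -⟩ := hFE E hE
  obtain rfl : β = 0 := Order.lt_one_iff.1 hβ
  obtain ⟨s, rfl⟩ := mem_Broom_zero.1 hB
  rw [← hφ.image_eq]
  exact (Set.finite_singleton s).image φ

theorem finite_prefixes (h : FinSeq) : {s : FinSeq | s <+: h}.Finite := by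
  refine (List.finite_toSet h.inits).subset fun s hs => ?_
  simpa using hs

/-- The local form of the theorem, proved by induction on `α`; at a successor `γ + 1` with `γ ≠ 0`,
every `s ∈ D_i^γ(T)` extending `t` has to be an initial segment of the handle of some member of
the covering family. -/
theorem not_covered {B : Set FinSeq} {A : Set Baire} (hBA : InfExtension B A)
    (α : Ordinal.{0}) : ∀ t ∈ DiIter (clTr B) α, ¬ Covered α (A ∩ Nbhd t) := by
  obtain ⟨φ, hφ, hext⟩ := hBA
  induction α using Ordinal.limitRecOn with
  | zero =>
    rintro t ht ⟨F, -, hFE, hX⟩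
    rw [DiIter_zero] at ht
    obtain ⟨b, hb, htb⟩ := ht
    obtain ⟨E, hE, -⟩ := hX ⟨hφ.mapsTo hb, (hext b hb).mono htb⟩
    obtain ⟨β, hβ, -⟩ := hFE E hE
    exact absurd hβ not_lt_zero
  | limit α hα ih =>
    intro t ht hcov
    obtain ⟨γ, hγ, h⟩ := hcov.exists_lt_of_limit hα
    rw [DiIter_limit _ hα] at ht
    simp only [Set.mem_iInter] at ht
    exact ih γ hγ t (ht γ hγ) h
  | add_one γ ih =>
    intro t ht hcov
    rw [DiIter_succ] at ht
    by_cases hγ : γ = 0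
    · subst hγ
      rw [DiIter_zero] at ht
      rw [zero_add] at hcov
      -- infinitely many elements of the tree above `t` require infinitely many elements of `B`
      have hfin : {b ∈ B | t <+: b}.Finite := by
        refine Set.Finite.of_finite_image (f := φ) (hcov.finite.subset ?_)
          (hφ.injOn.mono fun b hb => hb.1)
        rintro _ ⟨b, ⟨hb, htb⟩, rfl⟩
        exact ⟨hφ.mapsTo hb, (hext b hb).mono htb⟩
      refine ht.2 ((hfin.biUnion fun b _ => finite_prefixes b).subset ?_)
      rintro s ⟨⟨b, hb, hsb⟩, hts⟩
      exact Set.mem_biUnion (show b ∈ {b ∈ B | t <+: b} from ⟨hb, hts.trans hsb⟩) hsb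
    · obtain ⟨F, hF, hFE, hX⟩ := hcov
      have hh : ∀ E ∈ F, ∃ h : FinSeq, ∀ s : FinSeq, ¬ s <+: h →
          ∃ E' : Set Baire, E ∩ Nbhd s ⊆ E' ∧ ∃ δ < γ, E' ∈ Eclass δ := by
        intro E hE
        obtain ⟨β, hβ, hEβ⟩ := hFE E hE
        exact exists_handle hγ (Order.lt_succ_iff.1 hβ) hEβ
      choose! h hh using hh
      refine ht.2 ((hF.biUnion fun E _ => finite_prefixes (h E)).subset ?_)
      rintro s ⟨hs, hts⟩
      by_contra hcon
      simp only [Set.mem_iUnion, Set.mem_ofPred_eq, not_exists] at hcon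
      have hE' : ∀ E ∈ F, ∃ E' : Set Baire, E ∩ Nbhd s ⊆ E' ∧ ∃ δ < γ, E' ∈ Eclass δ :=
        fun E hE => hh E hE s (hcon E hE)
      choose! E' hsub hcls using hE'
      refine ih s hs ⟨E' '' F, hF.image E', ?_, ?_⟩
      · rintro _ ⟨E, hE, rfl⟩
        exact hcls E hE
      · rintro x ⟨hxA, hxs⟩
        obtain ⟨E, hE, hxE⟩ := hX ⟨hxA, ExtendsF.mono hxs hts⟩
        exact ⟨E' E, ⟨E, hE, rfl⟩, hsub E hE ⟨hxE, hxs⟩⟩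

/-- Let `α < ω₁` and suppose `H ⊆ ω^ω` contains an infinite extension of some `B ⊆ 𝒮` with
`r_i(B) ≥ α`. Then `H` cannot be covered by finitely many elements of `⋃_{β<α} 𝓔_β`. -/
theorem statement19 (α : Ordinal.{0}) (hα : α < omega1)
    (H : Set Baire) (B : Set FinSeq) (hrank : (α : WithBot Ordinal.{0}) ≤ rank B)
    (A : Set Baire) (hext : InfExtension B A) (hAH : A ⊆ H) :
    ¬ ∃ (k : ℕ) (E : Fin k → Set Baire),
        (∀ i, ∃ β, β < α ∧ E i ∈ Eclass β) ∧ H ⊆ ⋃ i, E i := by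
  rintro ⟨k, E, hE, hcov⟩
  refine not_covered hext α [] (nil_mem_of_le_rank hα hrank)
    ⟨Set.range E, Set.finite_range E, ?_, ?_⟩
  · rintro _ ⟨i, rfl⟩
    exact hE i
  · rw [Set.sUnion_range]
    exact Set.inter_subset_left.trans (hAH.trans hcov)

end
end
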